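/- Assume that ‖·‖_X is an r-norm for some r ∈ (0,1] and that all functions in N¹X are quasi-continuous. Then C̃_{X,r} is an outer capacity: for every E ⊆ P, C̃_{X,r}(E) = inf{C̃_{X,r}(G) : G open, G ⊇ E}. In particular, if the modulus of concavity c equals 1 (so that ‖·‖_X is a norm), then C_X is an outer capacity. -/

import Mathlib

/-!
Let `(u, g)` be an almost optimal pair for `E`. Multiplying it by a constant slightly larger than
`1` costs little and makes `u > 1` on `E`. As `u ∈ N¹X` is quasi-continuous, it is continuous off an
open set `V` of small capacity, so `G = V ∪ {u > 1}` is open and contains `E`. For an `r`-norm,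
`C̃_{X,r}^r` is subadditive, whence `C̃_{X,r}(G)^r` exceeds the energy of `(u, g)` by at most
`C̃_{X,r}(V)^r ≤ 2 C_X(V)^r`. Subadditivity uses the maximum of two competitors rather than their
sum, so that no truncation to nonnegative functions is required.

If the modulus of concavity is `1`, then `‖·‖_X` is a `1`-norm and `C_X = C̃_{X,1}`.
-/

open MeasureTheory Filter Set Topology Metric ENNReal

noncomputable section

/-- A (non-constant, rectifiable) curve in `P`, parametrized by arc length. -/
structure Curve (P : Type*) [PseudoMetricSpace P] where
  len : ℝ
  len_pos : 0 < len
  toFun : ℝ → P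
  lip : LipschitzOnWith 1 toFun (Set.Icc 0 len)

variable {P : Type*}

/-- The curve integral `∫_γ ρ ds`. -/
def curveLint [PseudoMetricSpace P] (γ : Curve P) (ρ : P → ℝ≥0∞) : ℝ≥0∞ :=
  ∫⁻ t in Set.Icc (0 : ℝ) γ.len, ρ (γ.toFun t)

/-- `g` is an upper gradient of `u`. -/
def IsUpperGradient [PseudoMetricSpace P] [MeasurableSpace P]
    (u : P → EReal) (g : P → ℝ≥0∞) : Prop :=
  Measurable g ∧
    ∀ γ : Curve P, (u (γ.toFun 0) - u (γ.toFun γ.len)).abs ≤ curveLint γ g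

/-- A quasi-Banach function lattice over `(P, μ)` with continuous quasi-norm. -/
structure QBFL (P : Type*) [MeasurableSpace P] (μ : MeasureTheory.Measure P) where
  nrm : (P → EReal) → ℝ≥0∞
  cc : ℝ≥0∞
  one_le_cc : 1 ≤ cc
  cc_lt_top : cc < ⊤
  nrm_eq_zero_iff : ∀ u : P → EReal, Measurable u → (nrm u = 0 ↔ u =ᵐ[μ] 0)
  nrm_smul : ∀ (a : ℝ) (u : P → EReal),
    nrm (fun x => (a : EReal) * u x) = ENNReal.ofReal |a| * nrm u
  nrm_triangle : ∀ u v : P → EReal,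
    nrm (fun x => u x + v x) ≤ cc * (nrm u + nrm v)
  nrm_mono : ∀ u v : P → EReal, (∀ᵐ x ∂μ, (u x).abs ≤ (v x).abs) → nrm u ≤ nrm v
  nrm_rieszFischer : ∀ f : ℕ → P → EReal, (∀ n, ∀ᵐ x ∂μ, 0 ≤ f n x) →
    nrm (fun x => ∑' n, f n x) ≤ ∑' n, cc ^ (n + 1) * nrm (f n)
  nrm_continuous : ∀ (f : ℕ → P → EReal) (u : P → EReal),
    Tendsto (fun n => nrm fun x => f n x - u x) atTop (𝓝 0) →
    Tendsto (fun n => nrm (f n)) atTop (𝓝 (nrm u))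

variable [MetricSpace P] [MeasurableSpace P] {μ : MeasureTheory.Measure P}

/-- The quasi-norm applied to a `ℝ≥0∞`-valued function. -/
def QBFL.nrmE (X : QBFL P μ) (g : P → ℝ≥0∞) : ℝ≥0∞ :=
  X.nrm fun x => (g x : EReal)

/-- The Newtonian quasi-seminorm `‖u‖_{N¹X}`. -/
def QBFL.newt (X : QBFL P μ) (u : P → EReal) : ℝ≥0∞ :=
  X.nrm u + ⨅ g ∈ {g : P → ℝ≥0∞ | IsUpperGradient u g}, X.nrmE g

/-- Membership in the Newtonian space `N¹X`. -/
def QBFL.memN1 (X : QBFL P μ) (u : P → EReal) : Prop :=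
  Measurable u ∧ X.newt u < ⊤

/-- The Sobolev capacity `C_X`. -/
def QBFL.cap (X : QBFL P μ) (E : Set P) : ℝ≥0∞ :=
  ⨅ u ∈ {u : P → EReal | X.memN1 u ∧ ∀ x ∈ E, 1 ≤ u x}, X.newt u


/-- `u` is weakly quasi-continuous: for every `ε > 0` there is a set `E` of capacity
less than `ε` such that the restriction of `u` to the complement of `E` is finite
and continuous. -/
def QBFL.WeaklyQC (X : QBFL P μ) (u : P → EReal) : Prop :=
  ∀ ε : ℝ≥0∞, 0 < ε → ∃ E : Set P, X.cap E < ε ∧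
    (∀ x ∈ Eᶜ, u x ≠ ⊤ ∧ u x ≠ ⊥) ∧ ContinuousOn u Eᶜ

/-- `u` is quasi-continuous: the exceptional set can moreover be chosen open. -/
def QBFL.QC (X : QBFL P μ) (u : P → EReal) : Prop :=
  ∀ ε : ℝ≥0∞, 0 < ε → ∃ E : Set P, IsOpen E ∧ X.cap E < ε ∧
    (∀ x ∈ Eᶜ, u x ≠ ⊤ ∧ u x ≠ ⊥) ∧ ContinuousOn u Eᶜ

/-- The Sobolev capacity `C̃_{X,r}`. -/
def QBFL.capR (X : QBFL P μ) (r : ℝ) (E : Set P) : ℝ≥0∞ :=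
  ⨅ q ∈ {q : (P → EReal) × (P → ℝ≥0∞) |
      Measurable q.1 ∧ (∀ x ∈ E, 1 ≤ q.1 x) ∧ IsUpperGradient q.1 q.2},
    (X.nrm q.1 ^ r + X.nrmE q.2 ^ r) ^ (1 / r)

/-- `‖·‖_X` is an `r`-norm. -/
def QBFL.IsRNorm (X : QBFL P μ) (r : ℝ) : Prop :=
  ∀ u v : P → EReal, X.nrm (fun x => u x + v x) ^ r ≤ X.nrm u ^ r + X.nrm v ^ r

open scoped NNReal

lemma isOpen_union_preimage_of_continuousOn {α β : Type*} [TopologicalSpace α] [TopologicalSpace β]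
    {f : α → β} {V : Set α} {T : Set β} (hf : ContinuousOn f Vᶜ) (hV : IsOpen V) (hT : IsOpen T) :
    IsOpen (V ∪ f ⁻¹' T) := by
  have hclosed := hf.preimage_isClosed_of_isClosed hV.isClosed_compl hT.isClosed_compl
  rwa [preimage_compl, ← compl_union, isClosed_compl_iff] at hclosed

lemma exists_one_lt_rpow_mul_lt (r : ℝ) {a b : ℝ≥0∞} (hab : a < b) :
    ∃ t : ℝ≥0, 1 < t ∧ (t : ℝ≥0∞) ^ r * a < b := by
  have hcont : Tendsto (fun t : ℝ≥0 => (t : ℝ≥0∞) ^ r) (𝓝 1) (𝓝 1) := by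
    simpa [Function.comp_def] using
      (ENNReal.continuous_rpow_const.comp ENNReal.continuous_coe).tendsto (1 : ℝ≥0)
  have hmul : Tendsto (fun t : ℝ≥0 => (t : ℝ≥0∞) ^ r * a) (𝓝[>] 1) (𝓝 a) := by
    simpa using (ENNReal.Tendsto.mul_const hcont (.inl one_ne_zero)).mono_left nhdsWithin_le_nhds
  exact (eventually_mem_nhdsWithin.and (hmul.eventually_lt_const hab)).exists

lemma exists_pos_add_two_mul_rpow_lt {r : ℝ} (hr : 0 < r) {a b : ℝ≥0∞} (hab : a < b) :
    ∃ ε : ℝ≥0∞, 0 < ε ∧ a + 2 * ε ^ r < b := by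
  have hcont : Tendsto (fun ε : ℝ≥0∞ => a + 2 * ε ^ r) (𝓝[>] 0) (𝓝 a) := by
    have hrpow : Tendsto (fun ε : ℝ≥0∞ => ε ^ r) (𝓝[>] 0) (𝓝 0) := by
      simpa [hr] using
        ((ENNReal.continuous_rpow_const (y := r)).tendsto 0).mono_left nhdsWithin_le_nhds
    simpa using (ENNReal.Tendsto.const_mul hrpow (.inr ofNat_ne_top)).const_add a
  exact (eventually_mem_nhdsWithin.and (hcont.eventually_lt_const hab)).exists

section EReal

lemma ereal_abs_coe_ennreal (x : ℝ≥0∞) : (x : EReal).abs = x := by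
  induction x with
  | top => rfl
  | coe x => rw [EReal.coe_nnreal_eq_coe_real, EReal.abs_def, NNReal.abs_eq, ofReal_coe_nnreal]

lemma ereal_abs_max_le_add (a b : EReal) : (max a b).abs ≤ a.abs + b.abs := by
  rcases max_choice a b with h | h <;> rw [h]
  exacts [le_self_add, le_add_self]

-- `⊤ - ⊤ = ⊥` in `EReal`, and `⊥.abs = ⊤`: this is the convention `|(±∞) - (±∞)| = ∞`.
lemma ereal_abs_sub_eq_top {x y : EReal} (h : x = ⊤ ∨ x = ⊥ ∨ y = ⊤ ∨ y = ⊥) :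
    (x - y).abs = ⊤ := by
  induction x <;> induction y <;> simp_all

lemma ereal_abs_max_sub_max_le_add (a b c d : EReal) :
    (max a b - max c d).abs ≤ (a - c).abs + (b - d).abs := by
  by_cases hac : a = ⊤ ∨ a = ⊥ ∨ c = ⊤ ∨ c = ⊥
  · simp [ereal_abs_sub_eq_top hac]
  by_cases hbd : b = ⊤ ∨ b = ⊥ ∨ d = ⊤ ∨ d = ⊥
  · simp [ereal_abs_sub_eq_top hbd]
  push Not at hac hbd
  lift a to ℝ using ⟨hac.1, hac.2.1⟩
  lift c to ℝ using hac.2.2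
  lift b to ℝ using ⟨hbd.1, hbd.2.1⟩
  lift d to ℝ using hbd.2.2
  have hreal : |max a b - max c d| ≤ |a - c| + |b - d| :=
    (abs_max_sub_max_le_max a b c d).trans (max_le_add_of_nonneg (abs_nonneg _) (abs_nonneg _))
  have hofReal := ENNReal.ofReal_le_ofReal hreal
  rw [ENNReal.ofReal_add (abs_nonneg _) (abs_nonneg _)] at hofReal
  simpa only [← EReal.coe_strictMono.monotone.map_max, ← EReal.coe_sub, EReal.abs_def] using hofReal

lemma ereal_abs_nnreal_mul_sub_mul (t : ℝ≥0) (x y : EReal) :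
    (((t : ℝ) : EReal) * x - ((t : ℝ) : EReal) * y).abs = t * (x - y).abs := by
  rw [sub_eq_add_neg, ← mul_neg, ← EReal.left_distrib_of_nonneg_of_ne_top
    (EReal.coe_nonneg.2 t.coe_nonneg) (EReal.coe_ne_top _), ← sub_eq_add_neg, EReal.abs_mul,
    EReal.abs_def, NNReal.abs_eq, ENNReal.ofReal_coe_nnreal]

end EReal

section UpperGradient

variable {Q : Type*} [PseudoMetricSpace Q] [MeasurableSpace Q] {u v : Q → EReal} {g h : Q → ℝ≥0∞}

lemma IsUpperGradient.max (hu : IsUpperGradient u g) (hv : IsUpperGradient v h) :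
    IsUpperGradient (fun x => max (u x) (v x)) (fun x => g x + h x) := by
  refine ⟨hu.1.add hv.1, fun γ => ?_⟩
  calc _ ≤ (u (γ.toFun 0) - u (γ.toFun γ.len)).abs + (v (γ.toFun 0) - v (γ.toFun γ.len)).abs :=
        ereal_abs_max_sub_max_le_add _ _ _ _
    _ ≤ curveLint γ g + curveLint γ h := add_le_add (hu.2 γ) (hv.2 γ)
    _ ≤ curveLint γ (fun x => g x + h x) := le_lintegral_add _ _

lemma IsUpperGradient.const_mul (hu : IsUpperGradient u g) (t : ℝ≥0) :
    IsUpperGradient (fun x => ((t : ℝ) : EReal) * u x) (fun x => t * g x) := by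
  refine ⟨hu.1.const_mul _, fun γ => ?_⟩
  calc _ = t * (u (γ.toFun 0) - u (γ.toFun γ.len)).abs := ereal_abs_nnreal_mul_sub_mul _ _ _
    _ ≤ t * curveLint γ g := by gcongr; exact hu.2 γ
    _ ≤ curveLint γ (fun x => t * g x) := lintegral_const_mul_le _ _

/-- The pairs `(u, g)` competing in the definition of the capacities of `E`. No lower bound on `u`
off `E` is imposed. -/
def IsAdmissible (E : Set Q) (u : Q → EReal) (g : Q → ℝ≥0∞) : Prop :=
  Measurable u ∧ (∀ x ∈ E, 1 ≤ u x) ∧ IsUpperGradient u g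

lemma IsAdmissible.mono {E F : Set Q} (hu : IsAdmissible F u g) (hEF : E ⊆ F) :
    IsAdmissible E u g :=
  ⟨hu.1, fun x hx => hu.2.1 x (hEF hx), hu.2.2⟩

lemma IsAdmissible.max_union {E F : Set Q} (hu : IsAdmissible E u g) (hv : IsAdmissible F v h) :
    IsAdmissible (E ∪ F) (fun x => max (u x) (v x)) (fun x => g x + h x) :=
  ⟨hu.1.max hv.1, fun x hx => hx.elim (fun hE => le_max_of_le_left (hu.2.1 x hE))
    fun hF => le_max_of_le_right (hv.2.1 x hF), hu.2.2.max hv.2.2⟩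

end UpperGradient

namespace QBFL

section Energy

variable {Ω : Type*} [MeasurableSpace Ω] {ν : Measure Ω} (X : QBFL Ω ν) {r : ℝ}

lemma isRNorm_one_of_cc_eq_one (hcc : X.cc = 1) : X.IsRNorm 1 := fun u v => by
  simpa [hcc] using X.nrm_triangle u v

lemma nrm_nnreal_mul (t : ℝ≥0) (u : Ω → EReal) :
    X.nrm (fun x => ((t : ℝ) : EReal) * u x) = t * X.nrm u := by
  rw [X.nrm_smul, NNReal.abs_eq, ENNReal.ofReal_coe_nnreal]

lemma nrmE_nnreal_mul (t : ℝ≥0) (g : Ω → ℝ≥0∞) :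
    X.nrmE (fun x => t * g x) = t * X.nrmE g := by
  simpa only [nrmE, EReal.coe_ennreal_mul, EReal.coe_nnreal_eq_coe_real] using
    X.nrm_nnreal_mul t fun x => (g x : EReal)

lemma nrmE_abs (u : Ω → EReal) : X.nrmE (fun x => (u x).abs) = X.nrm u :=
  le_antisymm (X.nrm_mono _ _ (ae_of_all _ fun _ => (ereal_abs_coe_ennreal _).le))
    (X.nrm_mono _ _ (ae_of_all _ fun _ => (ereal_abs_coe_ennreal _).ge))

lemma nrm_max_le_nrmE (u v : Ω → EReal) :
    X.nrm (fun x => max (u x) (v x)) ≤ X.nrmE (fun x => (u x).abs + (v x).abs) :=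
  X.nrm_mono _ _ <| ae_of_all _ fun x => by
    simpa only [ereal_abs_coe_ennreal] using ereal_abs_max_le_add (u x) (v x)

variable {X} in
lemma IsRNorm.nrmE_add_rpow_le (hX : X.IsRNorm r) (g h : Ω → ℝ≥0∞) :
    X.nrmE (fun x => g x + h x) ^ r ≤ X.nrmE g ^ r + X.nrmE h ^ r := by
  simpa only [nrmE, EReal.coe_ennreal_add] using hX (fun x => (g x : EReal)) fun x => (h x : EReal)

variable {X} in
lemma IsRNorm.nrm_max_rpow_le (hX : X.IsRNorm r) (hr : 0 ≤ r) (u v : Ω → EReal) :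
    X.nrm (fun x => max (u x) (v x)) ^ r ≤ X.nrm u ^ r + X.nrm v ^ r :=
  calc _ ≤ X.nrmE (fun x => (u x).abs + (v x).abs) ^ r :=
        ENNReal.rpow_le_rpow (X.nrm_max_le_nrmE u v) hr
    _ ≤ X.nrmE (fun x => (u x).abs) ^ r + X.nrmE (fun x => (v x).abs) ^ r :=
        hX.nrmE_add_rpow_le _ _
    _ = X.nrm u ^ r + X.nrm v ^ r := by rw [nrmE_abs, nrmE_abs]

/-- The `r`-energy of a pair `(u, g)`, i.e. the `r`-th power of the quantity minimized in the
definition of `C̃_{X,r}`. -/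
def energy (r : ℝ) (u : Ω → EReal) (g : Ω → ℝ≥0∞) : ℝ≥0∞ :=
  X.nrm u ^ r + X.nrmE g ^ r

lemma energy_one (u : Ω → EReal) (g : Ω → ℝ≥0∞) : X.energy 1 u g = X.nrm u + X.nrmE g := by
  simp only [energy, ENNReal.rpow_one]

lemma energy_nnreal_mul (hr : 0 ≤ r) (t : ℝ≥0) (u : Ω → EReal) (g : Ω → ℝ≥0∞) :
    X.energy r (fun x => ((t : ℝ) : EReal) * u x) (fun x => t * g x) =
      (t : ℝ≥0∞) ^ r * X.energy r u g := by
  simp only [energy, nrm_nnreal_mul, nrmE_nnreal_mul, ENNReal.mul_rpow_of_nonneg _ _ hr, mul_add]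

lemma energy_le_two_mul_energy_one_rpow (hr : 0 ≤ r) (u : Ω → EReal) (g : Ω → ℝ≥0∞) :
    X.energy r u g ≤ 2 * X.energy 1 u g ^ r := by
  rw [energy_one, two_mul]
  exact add_le_add (ENNReal.rpow_le_rpow le_self_add hr) (ENNReal.rpow_le_rpow le_add_self hr)

variable {X} in
lemma IsRNorm.energy_max_le (hX : X.IsRNorm r) (hr : 0 ≤ r) (u v : Ω → EReal)
    (g h : Ω → ℝ≥0∞) :
    X.energy r (fun x => max (u x) (v x)) (fun x => g x + h x) ≤
      X.energy r u g + X.energy r v h :=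
  (add_le_add (hX.nrm_max_rpow_le hr u v) (hX.nrmE_add_rpow_le g h)).trans_eq
    (add_add_add_comm _ _ _ _)

end Energy

section Capacity

variable (X : QBFL P μ) {r : ℝ} {E : Set P} {u : P → EReal} {g : P → ℝ≥0∞}

lemma newt_le_energy_one (hg : IsUpperGradient u g) : X.newt u ≤ X.energy 1 u g := by
  rw [energy_one]
  exact add_le_add le_rfl (iInf₂_le g hg)

lemma memN1_of_energy_lt_top (hr : 0 < r) (hu : Measurable u) (hg : IsUpperGradient u g)
    (hfin : X.energy r u g < ⊤) : X.memN1 u := by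
  rw [energy, ENNReal.add_lt_top, ENNReal.rpow_lt_top_iff_of_pos hr,
    ENNReal.rpow_lt_top_iff_of_pos hr, ← ENNReal.add_lt_top, ← energy_one] at hfin
  exact ⟨hu, (X.newt_le_energy_one hg).trans_lt hfin⟩

lemma capR_rpow_eq_biInf (hr : 0 < r) (E : Set P) :
    X.capR r E ^ r = ⨅ q ∈ {q : (P → EReal) × (P → ℝ≥0∞) | IsAdmissible E q.1 q.2},
      X.energy r q.1 q.2 := by
  have hroot (a : ℝ≥0∞) : ENNReal.orderIsoRpow r hr (a ^ (1 / r)) = a := by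
    rw [ENNReal.orderIsoRpow_apply, one_div, ENNReal.rpow_inv_rpow hr.ne']
  calc X.capR r E ^ r = ENNReal.orderIsoRpow r hr (X.capR r E) := rfl
    _ = _ := by simp only [capR, OrderIso.map_iInf, hroot]; rfl

lemma capR_rpow_le_energy (hr : 0 < r) (hu : IsAdmissible E u g) :
    X.capR r E ^ r ≤ X.energy r u g := by
  rw [X.capR_rpow_eq_biInf hr]
  exact iInf₂_le (u, g) hu

lemma exists_isAdmissible_energy_lt (hr : 0 < r) {s : ℝ≥0∞} (hs : X.capR r E ^ r < s) :
    ∃ u g, IsAdmissible E u g ∧ X.energy r u g < s := by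
  simpa only [X.capR_rpow_eq_biInf hr, iInf_lt_iff, Prod.exists, mem_ofPred_eq, exists_prop]
    using hs

lemma capR_mono (r : ℝ) : Monotone (X.capR r) := fun _ _ hEF =>
  biInf_mono fun _ hq => IsAdmissible.mono hq hEF

variable {X} in
lemma IsRNorm.capR_union_rpow_le (hX : X.IsRNorm r) (hr : 0 < r) (E F : Set P) :
    X.capR r (E ∪ F) ^ r ≤ X.capR r E ^ r + X.capR r F ^ r := by
  rw [X.capR_rpow_eq_biInf hr E, X.capR_rpow_eq_biInf hr F]
  exact ENNReal.le_iInf₂_add_iInf₂ fun _ hp _ hq =>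
    (X.capR_rpow_le_energy hr (hp.max_union hq)).trans (hX.energy_max_le hr.le _ _ _ _)

lemma cap_le_energy_one (hu : IsAdmissible E u g) : X.cap E ≤ X.energy 1 u g := by
  rcases eq_top_or_lt_top (X.energy 1 u g) with htop | hfin
  · exact htop ▸ le_top
  · exact (iInf₂_le u ⟨X.memN1_of_energy_lt_top one_pos hu.1 hu.2.2 hfin, hu.2.1⟩).trans
      (X.newt_le_energy_one hu.2.2)

lemma cap_eq_capR_one : X.cap = X.capR 1 := by
  ext E
  rw [← ENNReal.rpow_one (X.capR 1 E)]
  apply le_antisymm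
  · rw [X.capR_rpow_eq_biInf one_pos]
    exact le_iInf₂ fun _ hq => X.cap_le_energy_one hq
  · refine le_iInf₂ fun u ⟨⟨hu, _⟩, huE⟩ => ?_
    rw [newt, ENNReal.add_iInf₂]
    exact le_iInf₂ fun g hg =>
      (X.capR_rpow_le_energy one_pos ⟨hu, huE, hg⟩).trans_eq (X.energy_one u g)

lemma capR_rpow_le_two_mul_cap_rpow (hr : 0 < r) (E : Set P) :
    X.capR r E ^ r ≤ 2 * X.cap E ^ r := by
  have hcap : X.cap E = ⨅ q ∈ {q : (P → EReal) × (P → ℝ≥0∞) | IsAdmissible E q.1 q.2},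
      X.energy 1 q.1 q.2 := by
    rw [cap_eq_capR_one, ← X.capR_rpow_eq_biInf one_pos, ENNReal.rpow_one]
  rw [← ENNReal.div_le_iff' two_ne_zero ofNat_ne_top, ← ENNReal.rpow_inv_le_iff hr, hcap]
  refine le_iInf₂ fun q hq => ?_
  rw [ENNReal.rpow_inv_le_iff hr, ENNReal.div_le_iff' two_ne_zero ofNat_ne_top]
  exact (X.capR_rpow_le_energy hr hq).trans (X.energy_le_two_mul_energy_one_rpow hr.le _ _)

lemma exists_one_lt_energy_lt (hr : 0 < r) {s : ℝ≥0∞} (hs : X.capR r E ^ r < s) :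
    ∃ u g, Measurable u ∧ IsUpperGradient u g ∧ (∀ x ∈ E, 1 < u x) ∧ X.energy r u g < s := by
  obtain ⟨u, g, ⟨hu, huE, hg⟩, hus⟩ := X.exists_isAdmissible_energy_lt hr hs
  obtain ⟨t, ht, hts⟩ := exists_one_lt_rpow_mul_lt r hus
  refine ⟨_, _, hu.const_mul _, hg.const_mul t, fun x hx => ?_,
    (X.energy_nnreal_mul hr.le t u g).trans_lt hts⟩
  calc (1 : EReal) < ((t : ℝ) : EReal) := by exact_mod_cast ht
    _ = ((t : ℝ) : EReal) * 1 := (mul_one _).symm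
    _ ≤ ((t : ℝ) : EReal) * u x :=
        mul_le_mul_of_nonneg_left (huE x hx) (EReal.coe_nonneg.2 t.coe_nonneg)

end Capacity

end QBFL

/-- The outer regularity that makes a capacity an outer capacity. Monotonicity and subadditivity
are not part of this predicate. -/
def IsOuterCapacity {Q : Type*} [TopologicalSpace Q] (C : Set Q → ℝ≥0∞) : Prop :=
  ∀ E : Set Q, C E = ⨅ G ∈ {G : Set Q | IsOpen G ∧ E ⊆ G}, C G

lemma isOuterCapacity_of_monotone {Q : Type*} [TopologicalSpace Q] {C : Set Q → ℝ≥0∞}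
    (hC : Monotone C) (hopen : ∀ E s, C E < s → ∃ G, IsOpen G ∧ E ⊆ G ∧ C G < s) :
    IsOuterCapacity C := fun E => by
  refine le_antisymm (le_iInf₂ fun G hG => hC hG.2) (le_of_forall_gt fun s hs => ?_)
  obtain ⟨G, hG, hEG, hGs⟩ := hopen E s hs
  exact (iInf₂_le G ⟨hG, hEG⟩).trans_lt hGs

namespace QBFL

variable {X : QBFL P μ} {r : ℝ}

lemma IsRNorm.exists_isOpen_superset_capR_lt (hX : X.IsRNorm r) (hr : 0 < r)
    (hqc : ∀ u : P → EReal, X.memN1 u → X.QC u) {E : Set P} {s : ℝ≥0∞} (hs : X.capR r E < s) :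
    ∃ G, IsOpen G ∧ E ⊆ G ∧ X.capR r G < s := by
  obtain ⟨u, g, hu, hg, huE, hus⟩ :=
    X.exists_one_lt_energy_lt hr ((ENNReal.rpow_lt_rpow_iff hr).2 hs)
  obtain ⟨ε, hε, hεs⟩ := exists_pos_add_two_mul_rpow_lt hr hus
  obtain ⟨V, hV, hVε, -, hVu⟩ :=
    hqc u (X.memN1_of_energy_lt_top hr hu hg (hus.trans_le le_top)) ε hε
  refine ⟨V ∪ u ⁻¹' Ioi 1, isOpen_union_preimage_of_continuousOn hVu hV isOpen_Ioi,
    fun x hx => .inr (huE x hx), (ENNReal.rpow_lt_rpow_iff hr).1 ?_⟩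
  calc X.capR r (V ∪ u ⁻¹' Ioi 1) ^ r
      ≤ X.capR r V ^ r + X.capR r (u ⁻¹' Ioi 1) ^ r := hX.capR_union_rpow_le hr _ _
    _ ≤ 2 * X.cap V ^ r + X.energy r u g :=
        add_le_add (X.capR_rpow_le_two_mul_cap_rpow hr V)
          (X.capR_rpow_le_energy hr ⟨hu, fun _ hx => le_of_lt hx, hg⟩)
    _ ≤ X.energy r u g + 2 * ε ^ r := by
        rw [add_comm]
        gcongr
    _ < s ^ r := hεs

theorem IsRNorm.isOuterCapacity_capR (hX : X.IsRNorm r) (hr : 0 < r)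
    (hqc : ∀ u : P → EReal, X.memN1 u → X.QC u) : IsOuterCapacity (X.capR r) :=
  isOuterCapacity_of_monotone (X.capR_mono r) fun _ _ => hX.exists_isOpen_superset_capR_lt hr hqc

end QBFL

theorem capR_outer_of_qc_general (X : QBFL P μ) {r : ℝ} (hr : 0 < r) (hX : X.IsRNorm r)
    (hqc : ∀ u : P → EReal, X.memN1 u → X.QC u) :
    IsOuterCapacity (X.capR r) ∧ (X.cc = 1 → IsOuterCapacity X.cap) := by
  refine ⟨hX.isOuterCapacity_capR hr hqc, fun hcc => ?_⟩
  rw [X.cap_eq_capR_one]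
  exact (X.isRNorm_one_of_cc_eq_one hcc).isOuterCapacity_capR one_pos hqc

/-- If all Newtonian functions are quasi-continuous, then `C̃_{X,r}` is an
outer capacity; if moreover the modulus of concavity equals `1`, then `C_X` is an outer
capacity. -/
theorem capR_outer_of_qc
    {P : Type*} [MetricSpace P] [MeasurableSpace P] [BorelSpace P]
    (μ : MeasureTheory.Measure P) [SigmaFinite μ]
    (hball : ∀ (x : P) (r : ℝ), 0 < r → 0 < μ (Metric.ball x r) ∧ μ (Metric.ball x r) < ⊤)
    (X : QBFL P μ) (r : ℝ) (hr0 : 0 < r) (hr1 : r ≤ 1) (hrn : X.IsRNorm r)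
    (hqc : ∀ u : P → EReal, X.memN1 u → X.QC u) :
    (∀ E : Set P, X.capR r E = ⨅ G ∈ {G : Set P | IsOpen G ∧ E ⊆ G}, X.capR r G) ∧
      (X.cc = 1 → ∀ E : Set P, X.cap E = ⨅ G ∈ {G : Set P | IsOpen G ∧ E ⊆ G}, X.cap G) :=
  capR_outer_of_qc_general X hr0 hrn hqc

end
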